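/- arXiv:2005.02945 — 2 statements merged into one kernel-verified Lean document; each statement's English description precedes it below -/
import Mathlib

section
/- Fix integers r ≥ 3 and n ≥ 1, and let q_n = (1 + rⁿ(r−2))/(r−1) and q_{n−1} = (1 + r^{n−1}(r−2))/(r−1). Then the set S := { t·(1, r, r², …, r^{n−1}) : t ∈ ℤ/q_nℤ } ⊆ (ℤ/q_nℤ)ⁿ (entries taken modulo q_n) is an independent set of cardinality q_n in C_{q_{n−1}, q_n}^{⊠n}; equivalently, for all distinct s, t ∈ ℤ/q_nℤ there exists i ∈ {0, …, n−1} such that δ(s·rⁱ, t·rⁱ) ≥ q_{n−1} modulo q_n. -/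
/-- The circular (Lee) distance on `ℤ/qℤ`: `δ(x,y) = min(|x-y|, q-|x-y|)`,
with representatives taken in `{0,…,q-1}`. -/
def circDist (q : ℕ) (x y : ZMod q) : ℕ := min (x - y).val (y - x).val

/-!
Let `q = q_n`, and suppose that the difference `a ∈ {0, …, q - 1}` of two points satisfies
`δ(a * r ^ i, 0) < q_{n-1}`, that is `r * δ(a * r ^ i, 0) < q`, for all `i < n`. Then each of the
first `n` base-`r` digits of `a / q` is `0` or `r - 1`, so the integer `⌊r ^ n * a / q⌋` that they
form is a multiple `(r - 1) * k`. Writing `r ^ n * a = (r - 1) * k * q + b` with `0 ≤ b < q` and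
substituting `(r - 1) * q = 1 + r ^ n * (r - 2)` shows that `r ^ n` divides `k + b`. Since
`k + b < r ^ n`, both vanish, and hence so does `a`.
-/

lemma mul_div_eq_mul_div_add_mul_mod_div (r x q : ℕ) :
    r * x / q = r * (x / q) + r * (x % q) / q := by
  obtain rfl | hq := Nat.eq_zero_or_pos q
  · simp
  conv_lhs => rw [← Nat.div_add_mod x q]
  rw [mul_add, mul_left_comm, Nat.mul_add_div hq]

lemma sub_one_dvd_mul_div_of_mul_min_lt {r q b : ℕ} (hb : b < q) (h : r * min b (q - b) < q) :
    r - 1 ∣ r * b / q := by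
  rcases min_choice b (q - b) with hmin | hmin <;> rw [hmin] at h
  · simp [Nat.div_eq_of_lt h]
  · obtain rfl | hr := Nat.eq_zero_or_pos r
    · simp
    suffices r * b / q = r - 1 from this ▸ dvd_rfl
    have hsum : r * (q - b) + r * b = r * q := by rw [← mul_add, Nat.sub_add_cancel hb.le]
    have hpos : 0 < r * (q - b) := Nat.mul_pos hr (Nat.sub_pos_of_lt hb)
    refine Nat.div_eq_of_lt_le ?_ ?_
    · rw [Nat.sub_one_mul]; omega
    · rw [Nat.sub_add_cancel hr]; omega

lemma sub_one_dvd_pow_mul_div_of_mul_min_lt {r q a n : ℕ} (ha : a < q)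
    (h : ∀ i < n, r * min (r ^ i * a % q) (q - r ^ i * a % q) < q) :
    r - 1 ∣ r ^ n * a / q := by
  have hq : 0 < q := Nat.zero_lt_of_lt ha
  induction n with
  | zero => simp [Nat.div_eq_of_lt ha]
  | succ n ih =>
    have hprev : r - 1 ∣ r ^ n * a / q := ih fun i hi => h i (Nat.lt_succ_of_lt hi)
    have hdigit := sub_one_dvd_mul_div_of_mul_min_lt (Nat.mod_lt _ hq) (h n n.lt_succ_self)
    rw [pow_succ', mul_assoc, mul_div_eq_mul_div_add_mul_mod_div]
    exact dvd_add (hprev.mul_left r) hdigit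

/-- The number `q_k = (1 + r ^ k * (r - 2)) / (r - 1)`, which serves as the order of the circular
graph for `k = n` and as its distance threshold for `k = n - 1`. For `2 ≤ r` both subtractions and
the division are exact. -/
def circModulus (r k : ℕ) : ℕ := (1 + r ^ k * (r - 2)) / (r - 1)

section CircModulus

variable {r : ℕ}

lemma sub_one_mul_circModulus (hr : 2 ≤ r) (k : ℕ) :
    (r - 1) * circModulus r k = 1 + r ^ k * (r - 2) := by
  obtain ⟨s, rfl⟩ := Nat.exists_eq_add_of_le' hr
  refine Nat.mul_div_cancel' (?_ : s + 1 ∣ 1 + (s + 2) ^ k * s)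
  induction k with
  | zero => simp [add_comm]
  | succ k ih =>
    refine (Nat.dvd_add_left dvd_rfl).1 (?_ : s + 1 ∣ 1 + (s + 2) ^ (k + 1) * s + (s + 1))
    have hrec : 1 + (s + 2) ^ (k + 1) * s + (s + 1) = (s + 2) * (1 + (s + 2) ^ k * s) := by ring
    exact hrec ▸ ih.mul_left _

lemma circModulus_pos (hr : 2 ≤ r) (k : ℕ) : 0 < circModulus r k := by
  refine Nat.pos_of_mul_pos_left (a := r - 1) ?_
  rw [sub_one_mul_circModulus hr]
  positivity

lemma circModulus_succ_add_one (hr : 2 ≤ r) (k : ℕ) :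
    circModulus r (k + 1) + 1 = r * circModulus r k := by
  have hsucc := sub_one_mul_circModulus hr (k + 1)
  have hk := sub_one_mul_circModulus hr k
  obtain ⟨s, rfl⟩ := Nat.exists_eq_add_of_le' hr
  simp only [Nat.add_sub_cancel, Nat.add_succ_sub_one] at hsucc hk
  refine Nat.eq_of_mul_eq_mul_left (Nat.add_pos_right s one_pos) ?_
  linear_combination hsucc - (s + 2) * hk

lemma eq_zero_of_sub_one_dvd_pow_mul_div {n a : ℕ} (hr : 2 ≤ r) (ha : a < circModulus r n)
    (h : r - 1 ∣ r ^ n * a / circModulus r n) : a = 0 := by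
  have hq := sub_one_mul_circModulus hr n
  have hP : 0 < r ^ n := by positivity
  set q := circModulus r n
  set b := r ^ n * a % q
  obtain ⟨k, hk⟩ := h
  obtain ⟨s, rfl⟩ := Nat.exists_eq_add_of_le' hr
  set P := (s + 2) ^ n
  simp only [Nat.add_sub_cancel, Nat.add_succ_sub_one] at hq hk
  have hdiv : q * ((s + 1) * k) + b = P * a := hk ▸ Nat.div_add_mod _ q
  have hdvd : P ∣ k + b := by
    have hsum : P * (s * k) + (k + b) = P * a := by linear_combination hdiv - k * hq
    exact (Nat.dvd_add_right (dvd_mul_right P _)).1 (hsum ▸ dvd_mul_right P a)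
  have hk_lt : (s + 1) * k < P := by
    rw [← hk]
    exact Nat.div_lt_of_lt_mul (mul_comm q P ▸ Nat.mul_lt_mul_of_pos_left ha hP)
  have hb_lt : b < q := Nat.mod_lt _ (Nat.zero_lt_of_lt ha)
  have hlt : k + b < P := by
    have hb_le : (s + 1) * (b + 1) ≤ 1 + P * s := hq ▸ Nat.mul_le_mul_left _ hb_lt
    refine lt_of_mul_lt_mul_left (a := s + 1) ?_ (Nat.zero_le _)
    linarith
  have hzero : k + b = 0 := Nat.eq_zero_of_dvd_of_lt hdvd hlt
  obtain ⟨hk0, hb0⟩ := Nat.add_eq_zero_iff.1 hzero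
  simpa [hk0, hb0, hP.ne'] using hdiv

end CircModulus

lemma circDist_eq_min_val_sub {q : ℕ} [NeZero q] (x y : ZMod q) :
    circDist q x y = min (x - y).val (q - (x - y).val) := by
  rw [circDist, ← neg_sub x y, ZMod.neg_val]
  split_ifs with h <;> simp [h]

lemma circDist_mul_pow {q : ℕ} [NeZero q] (r i : ℕ) (s t : ZMod q) :
    circDist q (s * (r : ZMod q) ^ i) (t * (r : ZMod q) ^ i) =
      min (r ^ i * (s - t).val % q) (q - r ^ i * (s - t).val % q) := by
  have hval : (s * (r : ZMod q) ^ i - t * (r : ZMod q) ^ i).val = r ^ i * (s - t).val % q := by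
    rw [← ZMod.val_natCast]
    push_cast [ZMod.natCast_zmod_val]
    ring_nf
  rw [circDist_eq_min_val_sub, hval]

lemma eq_of_mul_circDist_lt_circModulus {r n : ℕ} (hr : 2 ≤ r) {s t : ZMod (circModulus r n)}
    (h : ∀ i < n, r * circDist (circModulus r n) (s * (r : ZMod (circModulus r n)) ^ i)
      (t * (r : ZMod (circModulus r n)) ^ i) < circModulus r n) : s = t := by
  have : NeZero (circModulus r n) := ⟨(circModulus_pos hr n).ne'⟩
  simp only [circDist_mul_pow] at h
  have ha : (s - t).val < circModulus r n := ZMod.val_lt _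
  have hval : (s - t).val = 0 :=
    eq_zero_of_sub_one_dvd_pow_mul_div hr ha (sub_one_dvd_pow_mul_div_of_mul_min_lt ha h)
  exact sub_eq_zero.1 ((ZMod.val_eq_zero _).1 hval)

lemma exists_circModulus_le_circDist {r k : ℕ} (hr : 2 ≤ r) {s t : ZMod (circModulus r (k + 1))}
    (hst : s ≠ t) : ∃ i : Fin (k + 1), circModulus r k ≤ circDist (circModulus r (k + 1))
      (s * (r : ZMod (circModulus r (k + 1))) ^ (i : ℕ))
      (t * (r : ZMod (circModulus r (k + 1))) ^ (i : ℕ)) := by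
  contrapose! hst
  refine eq_of_mul_circDist_lt_circModulus hr fun i hi => ?_
  have hmul := Nat.mul_le_mul_left r (Nat.succ_le_of_lt (hst ⟨i, hi⟩))
  rw [← circModulus_succ_add_one hr, Nat.mul_succ] at hmul
  exact lt_of_add_lt_add_right (hmul.trans_lt (Nat.add_lt_add_left hr _))

lemma mul_pow_injective {R : Type*} [Monoid R] (r : R) (n : ℕ) [NeZero n] :
    Function.Injective fun (t : R) (i : Fin n) => t * r ^ (i : ℕ) :=
  fun s t hst => by simpa using congrFun hst 0

lemma ncard_setOf_eq_mul_pow {R : Type*} [Monoid R] (r : R) (n : ℕ) [NeZero n] :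
    {w : Fin n → R | ∃ t : R, w = fun i : Fin n => t * r ^ (i : ℕ)}.ncard = Nat.card R := by
  rw [← Set.ncard_range_of_injective (mul_pow_injective r n)]
  exact congrArg Set.ncard (Set.ext fun _ => exists_congr fun _ => eq_comm)

/-- Theorem: for integers `r ≥ 3`, `n ≥ 1` and `q_k := (1 + r^k(r-2))/(r-1)`,
the set `S = { t·(1, r, …, r^{n-1}) : t ∈ ℤ/q_nℤ }` is an independent set of
cardinality `q_n` in `C_{q_{n-1},q_n}^{⊠n}`; equivalently, for all distinct
`s, t ∈ ℤ/q_nℤ` there is a coordinate `i` with `δ(s·rⁱ, t·rⁱ) ≥ q_{n-1}`. -/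
theorem explicit_independent_set (r n : ℕ) (hr : 3 ≤ r) (hn : 0 < n)
    (qn qn1 : ℕ)
    (hqn : qn = (1 + r ^ n * (r - 2)) / (r - 1))
    (hqn1 : qn1 = (1 + r ^ (n - 1) * (r - 2)) / (r - 1)) :
    ({w : Fin n → ZMod qn |
        ∃ t : ZMod qn, w = fun i : Fin n => t * (r : ZMod qn) ^ (i : ℕ)} : Set _).ncard = qn
    ∧ (∀ u ∈ {w : Fin n → ZMod qn |
          ∃ t : ZMod qn, w = fun i : Fin n => t * (r : ZMod qn) ^ (i : ℕ)},
       ∀ v ∈ {w : Fin n → ZMod qn |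
          ∃ t : ZMod qn, w = fun i : Fin n => t * (r : ZMod qn) ^ (i : ℕ)},
        u ≠ v → ∃ i : Fin n, qn1 ≤ circDist qn (u i) (v i))
    ∧ (∀ s t : ZMod qn, s ≠ t →
        ∃ i : Fin n, qn1 ≤ circDist qn (s * (r : ZMod qn) ^ (i : ℕ))
          (t * (r : ZMod qn) ^ (i : ℕ))) := by
  obtain ⟨k, rfl⟩ := Nat.exists_eq_add_one.2 hn
  obtain rfl : qn = circModulus r (k + 1) := hqn
  obtain rfl : qn1 = circModulus r k := hqn1
  have hdist := @exists_circModulus_le_circDist r k (by omega)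
  refine ⟨(ncard_setOf_eq_mul_pow _ _).trans (Nat.card_zmod _), ?_, fun s t hst => hdist hst⟩
  rintro _ ⟨s, rfl⟩ _ ⟨t, rfl⟩ huv
  exact hdist fun hst => huv (by rw [hst])
end

section
/- Fix integers r ≥ 3 and n ≥ 1, and let q_n = (1 + rⁿ(r−2))/(r−1) and q_{n−1} = (1 + r^{n−1}(r−2))/(r−1). If B ⊆ (ℤ/q_nℤ)ⁿ is an independent set in C_{q_{n−1}, q_n}^{⊠n} with |B| = q_n, then for every coordinate j ∈ {1, …, n} and every symbol s ∈ ℤ/q_nℤ there is exactly one word of B whose j-th coordinate equals s. -/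
/-!
In a fixed coordinate, two words whose symbols lie in a common arc of `d` consecutive residues are
not separated there, so deleting that coordinate maps the words over the arc injectively onto an
independent set of dimension one less. Averaging over all `q` arcs gives `d |B| ≤ q α`, where `α`
is the independence number in the smaller dimension; for `q < r d` and by induction on the dimension
this yields `|B| ≤ q_m` in dimension `m`. For `d = q_{n-1}`, `q = q_n` and `|B| = q` the averaging
is tight, so every arc contains the symbols of exactly `d` words. Sliding the arc by one step shows
that the number of occurrences of a symbol is `d`-periodic, hence constant since `r d = 1` in
`ℤ/qℤ`.
-/

section WindowSums

open Finset

lemma periodic_of_sum_range_eq {R M : Type*} [AddMonoidWithOne R] [AddCancelCommMonoid M]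
    {f : R → M} {d : ℕ} {c : M} (h : ∀ a, ∑ i ∈ range d, f (a + i) = c) :
    Function.Periodic f (d : R) := by
  intro a
  have shifted : ∑ i ∈ range d, f (a + (i + 1 : ℕ)) = c := by
    simpa only [add_comm _ 1, Nat.cast_add, Nat.cast_one, add_assoc] using h (a + 1)
  have slide := (sum_range_succ (fun i : ℕ => f (a + i)) d).symm.trans (sum_range_succ' _ d)
  rw [h a, shifted, Nat.cast_zero, add_zero] at slide
  exact add_left_cancel slide

lemma sum_sum_range_add {G M : Type*} [AddGroupWithOne G] [Fintype G] [AddCommMonoid M]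
    (f : G → M) (d : ℕ) : ∑ a, ∑ i ∈ range d, f (a + i) = d • ∑ a, f a := by
  have sum_translate (i : ℕ) : ∑ a, f (a + i) = ∑ a, f a :=
    Equiv.sum_comp (Equiv.addRight (i : G)) f
  rw [sum_comm, sum_congr rfl fun i _ => sum_translate i, sum_const, card_range]

lemma eq_of_periodic_of_isUnit {q : ℕ} {β : Type*} {f : ZMod q → β} {c : ZMod q}
    (hf : Function.Periodic f c) (hc : IsUnit c) (s t : ZMod q) : f s = f t := by
  have apply_eq_zero (x : ZMod q) : f x = f 0 := by
    obtain ⟨b, hb⟩ := hc.exists_left_inv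
    obtain ⟨k, hk⟩ := ZMod.intCast_surjective (x * b)
    have hx : (k : ZMod q) * c = x := by rw [hk, mul_assoc, hb, mul_one]
    rw [← hx, hf.int_mul_eq]
  rw [apply_eq_zero s, apply_eq_zero t]

end WindowSums

section Arcs

lemma circDist_self {q : ℕ} (x : ZMod q) : circDist q x x = 0 := by
  simp [circDist]

variable {q : ℕ} [NeZero q]

lemma circDist_lt_of_val_sub_lt {d : ℕ} {a x y : ZMod q}
    (hx : (x - a).val < d) (hy : (y - a).val < d) : circDist q x y < d := by
  rw [circDist, min_lt_iff, ← sub_sub_sub_cancel_right x y a, ← sub_sub_sub_cancel_right y x a]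
  rcases le_total (y - a).val (x - a).val with h | h
  · exact .inl (by rw [ZMod.val_sub h]; omega)
  · exact .inr (by rw [ZMod.val_sub h]; omega)

lemma val_sub_eq_iff {a x : ZMod q} {i : ℕ} (hi : i < q) : (x - a).val = i ↔ x = a + i := by
  rw [← sub_eq_iff_eq_add']
  refine ⟨fun h => ?_, fun h => ?_⟩
  · rw [← h, ZMod.natCast_zmod_val]
  · rw [h, ZMod.val_natCast_of_lt hi]

end Arcs

section SymbolCount

open Finset

/-- The number of words of the code `B` whose `j`-th symbol is `s`. -/
def symbolCount {ι α : Type*} [DecidableEq α] (B : Finset (ι → α)) (j : ι) (s : α) : ℕ :=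
  #{w ∈ B | w j = s}

lemma sum_symbolCount {ι α : Type*} [DecidableEq α] [Fintype α] (B : Finset (ι → α)) (j : ι) :
    ∑ s, symbolCount B j s = #B :=
  (card_eq_sum_card_fiberwise fun _ _ => mem_coe.2 (mem_univ _)).symm

lemma sum_sum_range_symbolCount {ι : Type*} {q : ℕ} [NeZero q] (B : Finset (ι → ZMod q)) (j : ι)
    (d : ℕ) : ∑ a, ∑ i ∈ range d, symbolCount B j (a + i) = d * #B := by
  rw [sum_sum_range_add, sum_symbolCount, smul_eq_mul]

lemma sum_range_symbolCount {ι : Type*} {q d : ℕ} [NeZero q] (hdq : d ≤ q)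
    (B : Finset (ι → ZMod q)) (j : ι) (a : ZMod q) :
    ∑ i ∈ range d, symbolCount B j (a + i) = #{w ∈ B | (w j - a).val < d} := by
  have val_mem (w) (hw : w ∈ ({w ∈ B | (w j - a).val < d} : Finset _)) : (w j - a).val ∈ range d :=
    mem_range.2 (mem_filter.1 hw).2
  rw [card_eq_sum_card_fiberwise val_mem]
  refine sum_congr rfl fun i hi => ?_
  have hid : i < d := mem_range.1 hi
  rw [symbolCount, filter_filter]
  congr 1
  refine filter_congr fun w _ => ?_
  rw [← val_sub_eq_iff (hid.trans_le hdq)]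
  exact ⟨fun h => ⟨h ▸ hid, h⟩, And.right⟩

end SymbolCount

section IndependentSets

open Finset

/-- Independence of a set of words in the strong power `C_{d,q}^{⊠ι}` of the circular graph,
stated through circular distances: distinct words are at distance at least `d` in some
coordinate. -/
def IsCircIndep {ι : Type*} {q : ℕ} (d : ℕ) (B : Finset (ι → ZMod q)) : Prop :=
  (B : Set (ι → ZMod q)).Pairwise fun u v => ∃ i, d ≤ circDist q (u i) (v i)

lemma IsCircIndep.mono {ι : Type*} {q d : ℕ} {B C : Finset (ι → ZMod q)} (hC : IsCircIndep d C)
    (hBC : B ⊆ C) : IsCircIndep d B :=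
  Set.Pairwise.mono (coe_subset.2 hBC) hC

open Classical in
/-- The independence number `α(C_{d,q}^{⊠m})`: the largest size of an independent set of words of
length `m`. -/
noncomputable def circIndepNum (q d m : ℕ) [NeZero q] : ℕ :=
  ({C | IsCircIndep d C} : Finset (Finset (Fin m → ZMod q))).sup card

variable {q d m : ℕ} [NeZero q]

lemma circIndepNum_le {K : ℕ} (h : ∀ C : Finset (Fin m → ZMod q), IsCircIndep d C → #C ≤ K) :
    circIndepNum q d m ≤ K := by
  classical exact Finset.sup_le fun C hC => h C (mem_filter.1 hC).2

namespace IsCircIndep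

lemma card_le_circIndepNum {C : Finset (Fin m → ZMod q)} (hC : IsCircIndep d C) :
    #C ≤ circIndepNum q d m := by
  classical exact le_sup (f := card) (mem_filter.2 ⟨mem_univ C, hC⟩)

lemma pairwise_removeNth {B : Finset (Fin (m + 1) → ZMod q)} (hB : IsCircIndep d B)
    {j : Fin (m + 1)} {a : ZMod q} (harc : ∀ w ∈ B, (w j - a).val < d) :
    (B : Set (Fin (m + 1) → ZMod q)).Pairwise fun u v =>
      ∃ i, d ≤ circDist q (j.removeNth u i) (j.removeNth v i) := by
  intro u hu v hv huv
  obtain ⟨i, hi⟩ := hB hu hv huv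
  have hij : i ≠ j := by
    rintro rfl
    exact hi.not_gt (circDist_lt_of_val_sub_lt (harc u hu) (harc v hv))
  obtain ⟨k, rfl⟩ := Fin.exists_succAbove_eq hij
  exact ⟨k, hi⟩

lemma injOn_removeNth {B : Finset (Fin (m + 1) → ZMod q)} (hB : IsCircIndep d B)
    {j : Fin (m + 1)} {a : ZMod q} (harc : ∀ w ∈ B, (w j - a).val < d) :
    Set.InjOn (fun w => (j.removeNth w : Fin m → ZMod q)) (B : Set (Fin (m + 1) → ZMod q)) := by
  intro u hu v hv huv
  by_contra hne
  obtain ⟨i, hi⟩ := hB.pairwise_removeNth harc hu hv hne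
  rw [show j.removeNth u = j.removeNth v from huv, circDist_self] at hi
  exact absurd (harc u hu) (by omega)

lemma card_filter_arc_le {B : Finset (Fin (m + 1) → ZMod q)} (hB : IsCircIndep d B)
    (j : Fin (m + 1)) (a : ZMod q) : #{w ∈ B | (w j - a).val < d} ≤ circIndepNum q d m := by
  set W := {w ∈ B | (w j - a).val < d}
  have harc : ∀ w ∈ W, (w j - a).val < d := fun w hw => (mem_filter.1 hw).2
  have hW : IsCircIndep d W := hB.mono (filter_subset _ B)
  have hinj := hW.injOn_removeNth harc
  rw [← card_image_of_injOn hinj]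
  refine card_le_circIndepNum ?_
  rw [IsCircIndep, coe_image]
  exact hinj.pairwise_image.2 (hW.pairwise_removeNth harc)

lemma sum_range_symbolCount_le (hdq : d ≤ q) {B : Finset (Fin (m + 1) → ZMod q)}
    (hB : IsCircIndep d B) (j : Fin (m + 1)) (a : ZMod q) :
    ∑ i ∈ range d, symbolCount B j (a + i) ≤ circIndepNum q d m :=
  (sum_range_symbolCount hdq B j a).trans_le (hB.card_filter_arc_le j a)

lemma mul_card_le (hdq : d ≤ q) {B : Finset (Fin (m + 1) → ZMod q)} (hB : IsCircIndep d B) :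
    d * #B ≤ q * circIndepNum q d m :=
  calc d * #B = ∑ a : ZMod q, ∑ i ∈ range d, symbolCount B 0 (a + i) :=
        (sum_sum_range_symbolCount B 0 d).symm
    _ ≤ ∑ _a : ZMod q, circIndepNum q d m :=
        sum_le_sum fun a _ => hB.sum_range_symbolCount_le hdq 0 a
    _ = q * circIndepNum q d m := by rw [sum_const, card_univ, ZMod.card, smul_eq_mul]

lemma sum_range_symbolCount_eq (hdq : d ≤ q) {B : Finset (Fin (m + 1) → ZMod q)}
    (hB : IsCircIndep d B) (hcard : q * circIndepNum q d m ≤ d * #B) (j : Fin (m + 1))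
    (a : ZMod q) :
    ∑ i ∈ range d, symbolCount B j (a + i) = circIndepNum q d m := by
  have total : ∑ a : ZMod q, ∑ i ∈ range d, symbolCount B j (a + i) =
      ∑ _a : ZMod q, circIndepNum q d m := by
    rw [sum_sum_range_symbolCount, (hB.mul_card_le hdq).antisymm hcard, sum_const, card_univ,
      ZMod.card, smul_eq_mul]
  exact (sum_eq_sum_iff_of_le fun a _ => hB.sum_range_symbolCount_le hdq j a).1 total a
    (mem_univ a)

theorem mul_symbolCount_eq_card (hdq : d ≤ q) (hd : IsUnit (d : ZMod q))
    {B : Finset (Fin (m + 1) → ZMod q)} (hB : IsCircIndep d B)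
    (hcard : q * circIndepNum q d m ≤ d * #B) (j : Fin (m + 1)) (s : ZMod q) :
    q * symbolCount B j s = #B := by
  have periodic : Function.Periodic (symbolCount B j) (d : ZMod q) :=
    periodic_of_sum_range_eq (hB.sum_range_symbolCount_eq hdq hcard j)
  rw [← sum_symbolCount B j, sum_congr rfl fun t _ => eq_of_periodic_of_isUnit periodic hd t s,
    sum_const, card_univ, ZMod.card, smul_eq_mul]

end IsCircIndep

end IndependentSets

section CircSeq

open Finset

/-- The sequence `q_k = (1 + r ^ k (r - 2)) / (r - 1)`. For `2 ≤ r` the subtractions do not truncate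
and the division is exact. -/
def circSeq (r k : ℕ) : ℕ := (1 + r ^ k * (r - 2)) / (r - 1)

variable {r : ℕ}

lemma circSeq_mul_sub_one (hr : 2 ≤ r) (k : ℕ) :
    circSeq r k * (r - 1) = 1 + r ^ k * (r - 2) := by
  refine Nat.div_mul_cancel ?_
  obtain ⟨t, rfl⟩ := Nat.exists_eq_add_of_le' hr
  have pow_modEq : (t + 2) ^ k ≡ 1 [MOD t + 1] := by
    simpa using (Nat.add_modEq_left (n := t + 1) (a := 1)).pow k
  refine (Nat.modEq_zero_iff_dvd).1 (((pow_modEq.mul_right t).add_left 1).trans ?_)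
  simp [Nat.ModEq, add_comm 1 t]

lemma circSeq_zero (hr : 2 ≤ r) : circSeq r 0 = 1 := by
  rw [circSeq, pow_zero, one_mul]
  exact Nat.div_eq_of_eq_mul_left (by omega) (by omega)

lemma circSeq_pos (hr : 2 ≤ r) (k : ℕ) : 0 < circSeq r k :=
  Nat.pos_of_mul_pos_right (b := r - 1) (by rw [circSeq_mul_sub_one hr]; omega)

lemma circSeq_succ_add_one (hr : 2 ≤ r) (k : ℕ) : circSeq r (k + 1) + 1 = r * circSeq r k := by
  have hk := circSeq_mul_sub_one hr k
  have hk_succ := circSeq_mul_sub_one hr (k + 1)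
  obtain ⟨t, rfl⟩ := Nat.exists_eq_add_of_le' hr
  simp only [Nat.add_sub_cancel, Nat.add_succ_sub_one] at hk hk_succ
  refine Nat.eq_of_mul_eq_mul_right (Nat.add_one_pos t) ?_
  rw [pow_succ] at hk_succ
  linear_combination hk_succ - (t + 2) * hk

lemma circSeq_succ_lt_mul (hr : 2 ≤ r) (k : ℕ) : circSeq r (k + 1) < r * circSeq r k := by
  rw [← circSeq_succ_add_one hr]
  exact Nat.lt_succ_self _

lemma circSeq_le_succ (hr : 2 ≤ r) (k : ℕ) : circSeq r k ≤ circSeq r (k + 1) := by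
  have hsucc := circSeq_succ_add_one hr k
  have hpos := circSeq_pos hr k
  nlinarith

lemma isUnit_circSeq (hr : 2 ≤ r) (k : ℕ) : IsUnit (circSeq r k : ZMod (circSeq r (k + 1))) := by
  refine IsUnit.of_mul_eq_one_right (r : ZMod _) ?_
  rw [← Nat.cast_mul, ← circSeq_succ_add_one hr, Nat.cast_add_one, ZMod.natCast_self, zero_add]

theorem circIndepNum_le_circSeq (hr : 2 ≤ r) {q d : ℕ} [NeZero q] (hdq : d ≤ q)
    (hqrd : q < r * d) (m : ℕ) : circIndepNum q d m ≤ circSeq r m := by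
  induction m with
  | zero =>
    rw [circSeq_zero hr]
    exact circIndepNum_le fun C _ => card_le_one_of_subsingleton C
  | succ m ih =>
    refine circIndepNum_le fun C hC => ?_
    have hlt : d * #C < d * (r * circSeq r m) :=
      calc d * #C ≤ q * circIndepNum q d m := hC.mul_card_le hdq
        _ ≤ q * circSeq r m := Nat.mul_le_mul_left q ih
        _ < r * d * circSeq r m := Nat.mul_lt_mul_of_pos_right hqrd (circSeq_pos hr m)
        _ = d * (r * circSeq r m) := by ring
    rw [← circSeq_succ_add_one hr] at hlt
    exact Nat.lt_succ_iff.1 (Nat.lt_of_mul_lt_mul_left hlt)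

end CircSeq

/-- For integers `r ≥ 3`, `n ≥ 1` and `q_k := (1 + r^k(r-2))/(r-1)`, every
independent set `B` of cardinality `q_n` in `C_{q_{n-1},q_n}^{⊠n}` contains each
symbol of `ℤ/q_nℤ` exactly once in each coordinate. -/
theorem symbols_appear_once (r n : ℕ) (hr : 3 ≤ r) (hn : 0 < n)
    (qn qn1 : ℕ)
    (hqn : qn = (1 + r ^ n * (r - 2)) / (r - 1))
    (hqn1 : qn1 = (1 + r ^ (n - 1) * (r - 2)) / (r - 1))
    (B : Finset (Fin n → ZMod qn)) (hBcard : B.card = qn)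
    (hB : ∀ u ∈ B, ∀ v ∈ B, u ≠ v → ∃ i : Fin n, qn1 ≤ circDist qn (u i) (v i)) :
    ∀ j : Fin n, ∀ s : ZMod qn, (B.filter (fun w => w j = s)).card = 1 := by
  intro j s
  obtain ⟨m, rfl⟩ := Nat.exists_eq_succ_of_ne_zero hn.ne'
  change qn = circSeq r (m + 1) at hqn
  change qn1 = circSeq r m at hqn1
  subst hqn hqn1
  have hr2 : 2 ≤ r := by omega
  have hpos := circSeq_pos hr2 (m + 1)
  have : NeZero (circSeq r (m + 1)) := ⟨hpos.ne'⟩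
  have hle := circSeq_le_succ hr2 m
  have hindep : IsCircIndep (circSeq r m) B := fun u hu v hv => hB u hu v hv
  have htight : circSeq r (m + 1) * circIndepNum (circSeq r (m + 1)) (circSeq r m) m ≤
      circSeq r m * B.card := by
    rw [hBcard, mul_comm (circSeq r m)]
    exact Nat.mul_le_mul_left _ (circIndepNum_le_circSeq hr2 hle (circSeq_succ_lt_mul hr2 m) m)
  have hcount := hindep.mul_symbolCount_eq_card hle (isUnit_circSeq hr2 m) htight j s
  rw [hBcard] at hcount
  exact Nat.eq_of_mul_eq_mul_left hpos (hcount.trans (mul_one _).symm)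
end
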